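/- Fix an integer k ≥ 1. For n ≥ 1 let a_n be the number of equivalence classes of the k-twist congruence ≡ᵏ on S_n, and let i_n be the number of ≡ᵏ-classes of S_n whose weak-order minimum μ satisfies μ({1,…,j}) ≠ {1,…,j} for every 1 ≤ j ≤ n−1; set a_0 = 1. Then the identity (Σ_{n≥0} a_n tⁿ) · (1 − Σ_{n≥1} i_n tⁿ) = 1 holds in the ring of formal power series ℤ⟦t⟧. -/

import Mathlib

/-!
Orient every twist step so that it removes a descent (`sortStep`). Each oriented step goes strictly
down in the weak order (`weakLE_of_sortStep`, `not_weakLE_of_sortStep`), so sorting terminates; it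
is locally confluent, steps at disjoint positions commuting and overlapping ones satisfying the
braid relation. By Newman's lemma each class contains exactly one permutation to which no step
applies (`IsSorted`), and it lies weakly below all members of its class. Hence class minima are
the sorted permutations (`isTwistClassMin_iff`) and `a_n` counts them (`card_classes`).

A direct sum `α ⊕ β` is sorted if and only if `α` and `β` are (`isSorted_permSum`). Cutting a
nonempty sorted permutation after its first indecomposable block therefore gives
`a_n = ∑ i_j * a_(n-j)` over `1 ≤ j ≤ n` (`card_isSorted`), which is the identity of power series.
-/

/-- The (right) weak order on permutations of `Fin n`: `τ ≤ σ` iff every coinversion of `τ`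
(pair of values `i < j` whose positions in `τ` are inverted) is a coinversion of `σ`. -/
def weakLE {n : ℕ} (τ σ : Equiv.Perm (Fin n)) : Prop :=
  ∀ i j : Fin n, i < j → τ.symm j < τ.symm i → σ.symm j < σ.symm i
/-- One rewriting step of the `k`-twist congruence: exchange two adjacent entries of the
one-line notation (positions `p` and `q = p+1`) provided at least `k` values strictly
between the two exchanged values occur at later positions. -/
def twistStep (k : ℕ) {n : ℕ} (τ τ' : Equiv.Perm (Fin n)) : Prop :=
  ∃ p q : Fin n, (q : ℕ) = (p : ℕ) + 1 ∧ τ' = τ * Equiv.swap p q ∧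
    k ≤ (Finset.univ.filter (fun b : Fin n =>
      min (τ p) (τ q) < b ∧ b < max (τ p) (τ q) ∧ q < τ.symm b)).card

/-- The `k`-twist congruence `≡ᵏ` on permutations of `Fin n`: the equivalence relation
generated by the rewriting rule `twistStep`. -/
def twistCong (k : ℕ) {n : ℕ} : Equiv.Perm (Fin n) → Equiv.Perm (Fin n) → Prop :=
  Relation.EqvGen (twistStep k)

/-- `μ` is the weak-order minimum of its `k`-twist congruence class. -/
def isTwistClassMin (k : ℕ) {n : ℕ} (μ : Equiv.Perm (Fin n)) : Prop :=
  ∀ σ : Equiv.Perm (Fin n), twistCong k σ μ → weakLE μ σ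

/-- `μ` is `E`-indecomposable: `μ({1,…,j}) ≠ {1,…,j}` for every `1 ≤ j ≤ n-1`. -/
def eIndecomposable {n : ℕ} (μ : Equiv.Perm (Fin n)) : Prop :=
  ∀ j : ℕ, 1 ≤ j → j ≤ n - 1 → ¬ (∀ p : Fin n, (p : ℕ) < j → (μ p : ℕ) < j)


/-! ### Sorting steps and their normal forms -/

/-- The twist steps that remove a descent: the orientation `c a ⋯ → a c ⋯` of the rewriting rule,
with `τ q < τ p` the two exchanged entries. -/
def sortStep (k : ℕ) {n : ℕ} (τ τ' : Equiv.Perm (Fin n)) : Prop :=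
  ∃ p q : Fin n, (q : ℕ) = (p : ℕ) + 1 ∧ τ' = τ * Equiv.swap p q ∧ τ q < τ p ∧
    k ≤ (Finset.univ.filter (fun b : Fin n => τ q < b ∧ b < τ p ∧ q < τ.symm b)).card

/-- No sorting step applies to `τ`. -/
def IsSorted (k : ℕ) {n : ℕ} (τ : Equiv.Perm (Fin n)) : Prop :=
  ∀ τ', ¬ sortStep k τ τ'

lemma symm_mul_swap {n : ℕ} (τ : Equiv.Perm (Fin n)) (p q b : Fin n) :
    (τ * Equiv.swap p q).symm b = Equiv.swap p q (τ.symm b) := by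
  rw [Equiv.symm_apply_eq]; simp

lemma twistStep_of_sortStep {k n : ℕ} {τ τ' : Equiv.Perm (Fin n)} (h : sortStep k τ τ') :
    twistStep k τ τ' := by
  obtain ⟨p, q, hpq, rfl, hd, hc⟩ := h
  exact ⟨p, q, hpq, rfl, by rwa [min_eq_right hd.le, max_eq_left hd.le]⟩

/-- Transfers the count of witnesses from a step of `τ` to a step of `τ'`; the inclusion of the
witness sets is to be checked on the positions `y` of the witnesses in `τ`. -/
lemma count_mono {k n : ℕ} {τ τ' : Equiv.Perm (Fin n)} {a c a' c' q q' : Fin n}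
    (hc : k ≤ (Finset.univ.filter (fun b : Fin n => a < b ∧ b < c ∧ q < τ.symm b)).card)
    (h : ∀ y, a < τ y → τ y < c → q < y → a' < τ y ∧ τ y < c' ∧ q' < τ'.symm (τ y)) :
    k ≤ (Finset.univ.filter (fun b : Fin n => a' < b ∧ b < c' ∧ q' < τ'.symm b)).card := by
  refine hc.trans (Finset.card_le_card fun b hb => ?_)
  simp only [Finset.mem_filter, Finset.mem_univ, true_and] at hb ⊢
  simpa using h (τ.symm b) (by simpa using hb.1) (by simpa using hb.2.1) hb.2.2

lemma sortStep_or_of_twistStep {k n : ℕ} {τ τ' : Equiv.Perm (Fin n)} (h : twistStep k τ τ') :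
    sortStep k τ τ' ∨ sortStep k τ' τ := by
  obtain ⟨p, q, hpq, rfl, hc⟩ := h
  have hne : p ≠ q := by rintro rfl; omega
  rcases lt_or_gt_of_ne (τ.injective.ne hne) with hd | hd
  · right
    rw [min_eq_left hd.le, max_eq_right hd.le] at hc
    refine ⟨p, q, hpq, by simp [mul_assoc], by simpa using hd, ?_⟩
    refine count_mono hc fun y h1 h2 h3 => ⟨by simpa using h1, by simpa using h2, ?_⟩
    rw [symm_mul_swap, Equiv.symm_apply_apply, Equiv.swap_apply_of_ne_of_ne]
    · exact h3
    · rintro rfl; simp at h1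
    · rintro rfl; simp at h2
  · left
    rw [min_eq_right hd.le, max_eq_left hd.le] at hc
    exact ⟨p, q, hpq, rfl, hd, hc⟩

/-! ### Compatibility with the weak order -/

lemma weakLE_refl {n : ℕ} (τ : Equiv.Perm (Fin n)) : weakLE τ τ := fun _ _ _ h => h

lemma weakLE_trans {n : ℕ} {τ σ ρ : Equiv.Perm (Fin n)} (h : weakLE τ σ) (h' : weakLE σ ρ) :
    weakLE τ ρ := fun i j hij hi => h' i j hij (h i j hij hi)

lemma weakLE_of_sortStep {k n : ℕ} {τ τ' : Equiv.Perm (Fin n)} (h : sortStep k τ τ') :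
    weakLE τ' τ := by
  obtain ⟨p, q, hpq, rfl, hd, -⟩ := h
  intro i j hij hlt
  obtain ⟨x, rfl⟩ := τ.surjective i
  obtain ⟨y, rfl⟩ := τ.surjective j
  rw [symm_mul_swap, symm_mul_swap] at hlt
  simp only [Equiv.symm_apply_apply, Equiv.swap_apply_def] at hlt ⊢
  split_ifs at hlt <;> subst_vars <;> simp only [Fin.lt_def, Fin.ext_iff] at * <;> omega

lemma not_weakLE_of_sortStep {k n : ℕ} {τ τ' : Equiv.Perm (Fin n)} (h : sortStep k τ τ') :
    ¬ weakLE τ τ' := by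
  obtain ⟨p, q, hpq, rfl, hd, -⟩ := h
  intro hle
  have := hle _ _ hd (by simp [Fin.lt_def, hpq])
  simp only [symm_mul_swap, Equiv.symm_apply_apply, Equiv.swap_apply_left,
    Equiv.swap_apply_right, Fin.lt_def] at this
  omega

lemma weakLE_of_sortSteps {k n : ℕ} {τ τ' : Equiv.Perm (Fin n)}
    (h : Relation.ReflTransGen (sortStep k) τ τ') : weakLE τ' τ := by
  induction h with
  | refl => exact weakLE_refl _
  | tail _ h ih => exact weakLE_trans (weakLE_of_sortStep h) ih

/-- Sorting terminates, since each step goes strictly down in the weak order of a finite set. -/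
lemma sortStep_wf (k n : ℕ) :
    WellFounded (fun τ' τ : Equiv.Perm (Fin n) => sortStep k τ τ') := by
  let r : Equiv.Perm (Fin n) → Equiv.Perm (Fin n) → Prop :=
    fun x y => weakLE x y ∧ ¬ weakLE y x
  have : IsTrans _ r := ⟨fun a b c h h' =>
    ⟨weakLE_trans h.1 h'.1, fun hc => h.2 (weakLE_trans h'.1 hc)⟩⟩
  have : Std.Irrefl r := ⟨fun a h => h.2 h.1⟩
  exact Subrelation.wf (r := r)
    (fun h => ⟨weakLE_of_sortStep h, not_weakLE_of_sortStep h⟩)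
    (Finite.wellFounded_of_trans_of_irrefl r)

lemma exists_isSorted {k n : ℕ} (τ : Equiv.Perm (Fin n)) :
    ∃ μ, Relation.ReflTransGen (sortStep k) τ μ ∧ IsSorted k μ := by
  induction τ using (sortStep_wf k n).induction with
  | _ τ ih =>
    by_cases h : IsSorted k τ
    · exact ⟨τ, .refl, h⟩
    · simp only [IsSorted, not_forall, not_not] at h
      obtain ⟨τ', h⟩ := h
      obtain ⟨μ, h1, h2⟩ := ih τ' h
      exact ⟨μ, .head h h1, h2⟩

lemma IsSorted.eq_of_sortSteps {k n : ℕ} {μ τ : Equiv.Perm (Fin n)} (hμ : IsSorted k μ)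
    (h : Relation.ReflTransGen (sortStep k) μ τ) : τ = μ := by
  rcases Relation.ReflTransGen.cases_head h with h | ⟨_, h, _⟩
  · exact h.symm
  · exact (hμ _ h).elim

/-! ### Confluence -/

/-- Sorting steps at disjoint pairs of positions commute. -/
lemma local_confluence_far {k n : ℕ} {τ : Equiv.Perm (Fin n)} {p q p' q' : Fin n}
    (hpq : (q : ℕ) = p + 1) (hpq' : (q' : ℕ) = p' + 1) (hlt : q < p')
    (hd : τ q < τ p) (hd' : τ q' < τ p')
    (hc : k ≤ (Finset.univ.filter (fun b : Fin n => τ q < b ∧ b < τ p ∧ q < τ.symm b)).card)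
    (hc' : k ≤ (Finset.univ.filter
      (fun b : Fin n => τ q' < b ∧ b < τ p' ∧ q' < τ.symm b)).card) :
    Relation.Join (Relation.ReflTransGen (sortStep k))
      (τ * Equiv.swap p q) (τ * Equiv.swap p' q') := by
  rw [Fin.lt_def] at hlt
  have e1 : Equiv.swap p q p' = p' :=
    Equiv.swap_apply_of_ne_of_ne (by rintro rfl; omega) (by rintro rfl; omega)
  have e2 : Equiv.swap p q q' = q' :=
    Equiv.swap_apply_of_ne_of_ne (by rintro rfl; omega) (by rintro rfl; omega)
  have e3 : Equiv.swap p' q' p = p :=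
    Equiv.swap_apply_of_ne_of_ne (by rintro rfl; omega) (by rintro rfl; omega)
  have e4 : Equiv.swap p' q' q = q :=
    Equiv.swap_apply_of_ne_of_ne (by rintro rfl; omega) (by rintro rfl; omega)
  refine ⟨τ * Equiv.swap p q * Equiv.swap p' q', .single ?_, .single ?_⟩
  · refine ⟨p', q', hpq', rfl, by simpa [e1, e2] using hd', ?_⟩
    refine count_mono hc' fun y h1 h2 h3 =>
      ⟨by simpa [e2] using h1, by simpa [e1] using h2, ?_⟩
    rw [symm_mul_swap, Equiv.symm_apply_apply, Equiv.swap_apply_def]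
    simp only [Fin.lt_def, Fin.ext_iff] at *
    split_ifs <;> omega
  · refine ⟨p, q, hpq, ?_, by simpa [e3, e4] using hd, ?_⟩
    · have : Equiv.swap p q * Equiv.swap p' q' = Equiv.swap p' q' * Equiv.swap p q := by
        ext x
        simp only [Equiv.Perm.mul_apply, Equiv.swap_apply_def]
        simp only [Fin.ext_iff]
        split_ifs <;> omega
      rw [mul_assoc, this, mul_assoc]
    · refine count_mono hc fun y h1 h2 h3 =>
        ⟨by simpa [e4] using h1, by simpa [e3] using h2, ?_⟩
      rw [symm_mul_swap, Equiv.symm_apply_apply, Equiv.swap_apply_def]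
      simp only [Fin.lt_def, Fin.ext_iff] at *
      split_ifs <;> omega

/-- Two overlapping sorting steps act on consecutive entries `c b a` with `c > b > a`; both
completions `c b a → b c a → b a c → a b c` and `c b a → c a b → a c b → a b c` are legal, because
the witnesses for the pairs `c b` and `b a` stand to the right of all three entries. -/
lemma local_confluence_near {k n : ℕ} {τ : Equiv.Perm (Fin n)} {p q r : Fin n}
    (hpq : (q : ℕ) = p + 1) (hqr : (r : ℕ) = q + 1)
    (hd : τ q < τ p) (hd' : τ r < τ q)
    (hc : k ≤ (Finset.univ.filter (fun b : Fin n => τ q < b ∧ b < τ p ∧ q < τ.symm b)).card)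
    (hc' : k ≤ (Finset.univ.filter
      (fun b : Fin n => τ r < b ∧ b < τ q ∧ r < τ.symm b)).card) :
    Relation.Join (Relation.ReflTransGen (sortStep k))
      (τ * Equiv.swap p q) (τ * Equiv.swap q r) := by
  have npq : p ≠ q := by rintro rfl; omega
  have nqr : q ≠ r := by rintro rfl; omega
  have npr : p ≠ r := by rintro rfl; omega
  have e1 : Equiv.swap p q r = r := Equiv.swap_apply_of_ne_of_ne npr.symm nqr.symm
  have e2 : Equiv.swap q r p = p := Equiv.swap_apply_of_ne_of_ne npq npr
  -- the witnesses for the first pair, a priori only to the right of `q`, avoid `r`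
  have hr : ∀ y, τ q < τ y → q < y → r < y := by
    intro y h1 h2
    have : y ≠ r := by rintro rfl; exact absurd h1 hd'.not_gt
    simp only [Fin.lt_def, ne_eq, Fin.ext_iff] at *
    omega
  have s1 : ∀ y, r < y → Equiv.swap p q y = y := fun y hy =>
    Equiv.swap_apply_of_ne_of_ne (by rintro rfl; simp only [Fin.lt_def] at hy; omega)
      (by rintro rfl; simp only [Fin.lt_def] at hy; omega)
  have s2 : ∀ y, r < y → Equiv.swap q r y = y := fun y hy =>
    Equiv.swap_apply_of_ne_of_ne (by rintro rfl; simp only [Fin.lt_def] at hy; omega)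
      (by rintro rfl; simp only [Fin.lt_def] at hy; omega)
  have hqr' : q < r := by rw [Fin.lt_def]; omega
  refine ⟨τ * Equiv.swap p q * Equiv.swap q r * Equiv.swap p q,
    .tail (b := τ * Equiv.swap p q * Equiv.swap q r) (.single ?_) ?_,
    .tail (b := τ * Equiv.swap q r * Equiv.swap p q) (.single ?_) ?_⟩
  · refine ⟨q, r, hqr, rfl, by simpa [e1] using hd'.trans hd, ?_⟩
    refine count_mono hc' fun y h1 h2 h3 =>
      ⟨by simpa [e1] using h1, by simpa using h2.trans hd, ?_⟩
    rwa [symm_mul_swap, Equiv.symm_apply_apply, s1 y h3]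
  · refine ⟨p, q, hpq, rfl, by simpa [e1, e2] using hd', ?_⟩
    refine count_mono hc' fun y h1 h2 h3 =>
      ⟨by simpa [e1] using h1, by simpa [e2] using h2, ?_⟩
    rw [symm_mul_swap, symm_mul_swap, Equiv.symm_apply_apply, s1 y h3, s2 y h3]
    exact hqr'.trans h3
  · refine ⟨p, q, hpq, rfl, by simpa [e2] using hd'.trans hd, ?_⟩
    refine count_mono hc fun y h1 h2 h3 =>
      ⟨by simpa using hd'.trans h1, by simpa [e2] using h2, ?_⟩
    rwa [symm_mul_swap, Equiv.symm_apply_apply, s2 y (hr y h1 h3)]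
  · refine ⟨q, r, hqr, ?_, by simpa [e1, e2] using hd, ?_⟩
    · have : Equiv.swap p q * Equiv.swap q r * Equiv.swap p q =
          Equiv.swap q r * Equiv.swap p q * Equiv.swap q r := by
        rw [Equiv.swap_mul_swap_mul_swap npq npr, Equiv.swap_comm p q, Equiv.swap_comm q r,
          Equiv.swap_mul_swap_mul_swap nqr.symm npr.symm, Equiv.swap_comm p r]
      simpa only [mul_assoc] using congrArg (τ * ·) this
    · refine count_mono hc fun y h1 h2 h3 =>
        ⟨by simpa [e1] using h1, by simpa [e2] using h2, ?_⟩
      have h4 := hr y h1 h3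
      rwa [symm_mul_swap, symm_mul_swap, Equiv.symm_apply_apply, s2 y h4, s1 y h4]

lemma local_confluence {k n : ℕ} {τ τ₁ τ₂ : Equiv.Perm (Fin n)}
    (h₁ : sortStep k τ τ₁) (h₂ : sortStep k τ τ₂) :
    Relation.Join (Relation.ReflTransGen (sortStep k)) τ₁ τ₂ := by
  obtain ⟨p, q, hpq, rfl, hd, hc⟩ := h₁
  obtain ⟨p', q', hpq', rfl, hd', hc'⟩ := h₂
  have hcases : q < p' ∨ p' = q ∨ p' = p ∨ p = q' ∨ q' < p := by
    simp only [Fin.lt_def, Fin.ext_iff]; omega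
  have symm : ∀ {a b : Equiv.Perm (Fin n)},
      Relation.Join (Relation.ReflTransGen (sortStep k)) a b →
      Relation.Join (Relation.ReflTransGen (sortStep k)) b a :=
    fun ⟨c, h, h'⟩ => ⟨c, h', h⟩
  rcases hcases with h | rfl | rfl | rfl | h
  · exact local_confluence_far hpq hpq' h hd hd' hc hc'
  · exact local_confluence_near hpq hpq' hd hd' hc hc'
  · obtain rfl : q = q' := Fin.ext (by omega)
    exact ⟨_, .refl, .refl⟩
  · exact symm (local_confluence_near hpq' hpq hd' hd hc' hc)
  · exact symm (local_confluence_far hpq' hpq h hd' hd hc' hc)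

/-- Newman's lemma for sorting steps. -/
lemma confluence {k n : ℕ} (τ : Equiv.Perm (Fin n)) : ∀ τ₁ τ₂ : Equiv.Perm (Fin n),
    Relation.ReflTransGen (sortStep k) τ τ₁ → Relation.ReflTransGen (sortStep k) τ τ₂ →
    Relation.Join (Relation.ReflTransGen (sortStep k)) τ₁ τ₂ := by
  induction τ using (sortStep_wf k n).induction with
  | _ τ ih =>
    intro τ₁ τ₂ h₁ h₂
    rcases Relation.ReflTransGen.cases_head h₁ with rfl | ⟨σ₁, s₁, h₁'⟩
    · exact ⟨τ₂, h₂, .refl⟩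
    rcases Relation.ReflTransGen.cases_head h₂ with rfl | ⟨σ₂, s₂, h₂'⟩
    · exact ⟨τ₁, .refl, h₁⟩
    obtain ⟨ρ, hρ₁, hρ₂⟩ := local_confluence s₁ s₂
    obtain ⟨π, hπ₁, hπ⟩ := ih σ₁ s₁ τ₁ ρ h₁' hρ₁
    obtain ⟨ω, hω₁, hω₂⟩ := ih σ₂ s₂ π τ₂ (hρ₂.trans hπ) h₂'
    exact ⟨ω, hπ₁.trans hω₁, hω₂⟩

lemma join_of_twistCong {k n : ℕ} {τ σ : Equiv.Perm (Fin n)} (h : twistCong k τ σ) :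
    Relation.Join (Relation.ReflTransGen (sortStep k)) τ σ := by
  have heq : Equivalence (Relation.Join (Relation.ReflTransGen (sortStep k (n := n)))) :=
    Relation.equivalence_join confluence
  induction h with
  | rel x y h =>
    rcases sortStep_or_of_twistStep h with h | h
    · exact ⟨y, .single h, .refl⟩
    · exact ⟨x, .refl, .single h⟩
  | refl x => exact heq.refl x
  | symm x y _ ih => exact heq.symm ih
  | trans x y z _ _ ih ih' => exact heq.trans ih ih'

lemma twistCong_of_sortSteps {k n : ℕ} {τ τ' : Equiv.Perm (Fin n)}
    (h : Relation.ReflTransGen (sortStep k) τ τ') : twistCong k τ τ' := by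
  induction h with
  | refl => exact .refl _
  | tail _ h ih => exact .trans _ _ _ ih (.rel _ _ (twistStep_of_sortStep h))

/-- By confluence a sorted permutation is reached from its whole class, hence lies below it. -/
lemma isTwistClassMin_iff {k n : ℕ} (μ : Equiv.Perm (Fin n)) :
    isTwistClassMin k μ ↔ IsSorted k μ := by
  constructor
  · intro h τ hτ
    exact not_weakLE_of_sortStep hτ (h τ (.symm _ _ (.rel _ _ (twistStep_of_sortStep hτ))))
  · intro h σ hσ
    obtain ⟨ρ, h1, h2⟩ := join_of_twistCong hσ
    rw [h.eq_of_sortSteps h2] at h1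
    exact weakLE_of_sortSteps h1

lemma card_classes (k n : ℕ) : Nat.card (Quot (twistCong k (n := n))) =
    Nat.card {μ : Equiv.Perm (Fin n) // IsSorted k μ} := by
  symm
  refine Nat.card_congr (Equiv.ofBijective (fun μ => Quot.mk _ μ.1) ⟨?_, ?_⟩)
  · rintro ⟨μ, hμ⟩ ⟨ν, hν⟩ h
    have h' : twistCong k μ ν :=
      ((Relation.EqvGen.is_equivalence (twistStep k)).eqvGen_iff).1 (Quot.eqvGen_exact h)
    obtain ⟨ρ, h1, h2⟩ := join_of_twistCong h'
    exact Subtype.ext ((hμ.eq_of_sortSteps h1).symm.trans (hν.eq_of_sortSteps h2))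
  · rintro ⟨τ⟩
    obtain ⟨μ, h, hμ⟩ := exists_isSorted (k := k) τ
    exact ⟨⟨μ, hμ⟩, (Quot.sound (twistCong_of_sortSteps h)).symm⟩

/-! ### Direct sums of permutations -/

/-- The direct sum `α ⊕ β`: `α` on the first `m` positions, a shifted copy of `β` on the rest. -/
def permSum {m l : ℕ} (α : Equiv.Perm (Fin m)) (β : Equiv.Perm (Fin l)) :
    Equiv.Perm (Fin (m + l)) :=
  finSumFinEquiv.permCongr (Equiv.Perm.sumCongr α β)

section permSum

variable {m l : ℕ} (α : Equiv.Perm (Fin m)) (β : Equiv.Perm (Fin l))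

@[simp] lemma permSum_castAdd (i : Fin m) :
    permSum α β (Fin.castAdd l i) = Fin.castAdd l (α i) := by
  simp [permSum, Equiv.permCongr_apply]

@[simp] lemma permSum_natAdd (i : Fin l) :
    permSum α β (Fin.natAdd m i) = Fin.natAdd m (β i) := by
  simp [permSum, Equiv.permCongr_apply]

@[simp] lemma permSum_symm_castAdd (i : Fin m) :
    (permSum α β).symm (Fin.castAdd l i) = Fin.castAdd l (α.symm i) := by
  rw [Equiv.symm_apply_eq]; simp

@[simp] lemma permSum_symm_natAdd (i : Fin l) :
    (permSum α β).symm (Fin.natAdd m i) = Fin.natAdd m (β.symm i) := by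
  rw [Equiv.symm_apply_eq]; simp

lemma permSum_count_castAdd (p q : Fin m) :
    (Finset.univ.filter (fun b : Fin (m + l) =>
      permSum α β (Fin.castAdd l q) < b ∧ b < permSum α β (Fin.castAdd l p) ∧
        Fin.castAdd l q < (permSum α β).symm b)).card =
    (Finset.univ.filter (fun b : Fin m => α q < b ∧ b < α p ∧ q < α.symm b)).card := by
  rw [← Finset.card_map (Fin.castAddEmb l) (s := Finset.univ.filter
    (fun b : Fin m => α q < b ∧ b < α p ∧ q < α.symm b))]
  refine congrArg Finset.card ?_
  ext b
  refine Fin.addCases (fun i => ?_) (fun i => ?_) b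
  all_goals simp only [Finset.mem_filter, Finset.mem_univ, true_and, Finset.mem_map,
    permSum_castAdd, permSum_symm_castAdd, permSum_symm_natAdd, Fin.castAddEmb_apply,
    Fin.lt_def, Fin.ext_iff, Fin.val_castAdd, Fin.val_natAdd]
  · constructor
    · intro h
      exact ⟨i, h, rfl⟩
    · rintro ⟨j, hj, e⟩
      rwa [Fin.ext e] at hj
  · constructor
    · rintro ⟨h1, h2, -⟩
      omega
    · rintro ⟨j, -, e⟩
      omega

lemma permSum_count_natAdd (p q : Fin l) :
    (Finset.univ.filter (fun b : Fin (m + l) =>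
      permSum α β (Fin.natAdd m q) < b ∧ b < permSum α β (Fin.natAdd m p) ∧
        Fin.natAdd m q < (permSum α β).symm b)).card =
    (Finset.univ.filter (fun b : Fin l => β q < b ∧ b < β p ∧ q < β.symm b)).card := by
  rw [← Finset.card_map (Fin.natAddEmb m) (s := Finset.univ.filter
    (fun b : Fin l => β q < b ∧ b < β p ∧ q < β.symm b))]
  refine congrArg Finset.card ?_
  ext b
  refine Fin.addCases (fun i => ?_) (fun i => ?_) b
  all_goals simp only [Finset.mem_filter, Finset.mem_univ, true_and, Finset.mem_map,
    permSum_castAdd, permSum_natAdd, permSum_symm_castAdd, permSum_symm_natAdd,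
    Fin.castAddEmb_apply, Fin.natAddEmb_apply, Fin.lt_def, Fin.ext_iff, Fin.val_castAdd,
    Fin.val_natAdd, add_lt_add_iff_left, add_right_inj]
  · constructor
    · rintro ⟨h1, h2, -⟩
      omega
    · rintro ⟨j, -, e⟩
      omega
  · constructor
    · intro h
      exact ⟨i, h, rfl⟩
    · rintro ⟨j, hj, e⟩
      rwa [Fin.ext e] at hj

/-- No descent of `α ⊕ β` straddles the two blocks, and the witnesses of a descent stay in its
block. -/
lemma isSorted_permSum (k : ℕ) :
    IsSorted k (permSum α β) ↔ IsSorted k α ∧ IsSorted k β := by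
  constructor
  · intro h
    refine ⟨fun τ' ⟨p, q, hpq, _, hd, hc⟩ => ?_, fun τ' ⟨p, q, hpq, _, hd, hc⟩ => ?_⟩
    · exact h _ ⟨Fin.castAdd l p, Fin.castAdd l q, by simpa using hpq, rfl,
        by simpa only [permSum_castAdd, permSum_natAdd, Fin.lt_def, Fin.val_castAdd, Fin.val_natAdd,
          add_lt_add_iff_left] using hd, by rwa [permSum_count_castAdd]⟩
    · exact h _ ⟨Fin.natAdd m p, Fin.natAdd m q, by simp [hpq, add_assoc], rfl,
        by simpa only [permSum_castAdd, permSum_natAdd, Fin.lt_def, Fin.val_castAdd, Fin.val_natAdd,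
          add_lt_add_iff_left] using hd, by rwa [permSum_count_natAdd]⟩
  · rintro ⟨hα, hβ⟩ τ' ⟨p, q, hpq, _, hd, hc⟩
    induction p using Fin.addCases with
    | left p =>
      induction q using Fin.addCases with
      | left q =>
        rw [permSum_count_castAdd] at hc
        exact hα _ ⟨p, q, by simpa using hpq, rfl, by simpa only [permSum_castAdd, permSum_natAdd, Fin.lt_def, Fin.val_castAdd, Fin.val_natAdd,
          add_lt_add_iff_left] using hd, hc⟩
      | right q =>
        simp only [permSum_castAdd, permSum_natAdd, Fin.lt_def, Fin.val_castAdd,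
          Fin.val_natAdd] at hd
        have := (α p).isLt
        omega
    | right p =>
      induction q using Fin.addCases with
      | left q =>
        simp at hpq
        have := q.isLt
        omega
      | right q =>
        rw [permSum_count_natAdd] at hc
        refine hβ _ ⟨p, q, ?_, rfl, by simpa only [permSum_castAdd, permSum_natAdd, Fin.lt_def, Fin.val_castAdd, Fin.val_natAdd,
          add_lt_add_iff_left] using hd, hc⟩
        simp at hpq
        omega

end permSum

/-- `μ` maps the first `j` positions into the first `j` values. -/
def SplitsAt {n : ℕ} (μ : Equiv.Perm (Fin n)) (j : ℕ) : Prop :=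
  ∀ p : Fin n, (p : ℕ) < j → (μ p : ℕ) < j

/-- `j ≥ 1` is the length of the first indecomposable block of `μ`. -/
def FirstSplit {n : ℕ} (μ : Equiv.Perm (Fin n)) (j : ℕ) : Prop :=
  1 ≤ j ∧ SplitsAt μ j ∧ ∀ i, 1 ≤ i → i < j → ¬ SplitsAt μ i

lemma splitsAt_permSum {m l : ℕ} (α : Equiv.Perm (Fin m)) (β : Equiv.Perm (Fin l)) {j : ℕ}
    (hj : j ≤ m) : SplitsAt (permSum α β) j ↔ SplitsAt α j := by
  constructor
  · intro h p hp
    simpa using h (Fin.castAdd l p) (by simpa using hp)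
  · intro h p hp
    induction p using Fin.addCases with
    | left p => simpa using h p (by simpa using hp)
    | right p => simp at hp; omega

lemma firstSplit_permSum {m l : ℕ} (hm : 1 ≤ m) (α : Equiv.Perm (Fin m))
    (β : Equiv.Perm (Fin l)) : FirstSplit (permSum α β) m ↔ eIndecomposable α := by
  constructor
  · rintro ⟨-, -, h⟩ j hj hjm hs
    exact h j hj (by omega) ((splitsAt_permSum α β (by omega)).2 hs)
  · intro h
    refine ⟨hm, (splitsAt_permSum α β le_rfl).2 fun p _ => (α p).isLt, fun i hi him hs => ?_⟩
    exact h i hi (by omega) ((splitsAt_permSum α β him.le).1 hs)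

lemma exists_permSum {m l : ℕ} {μ : Equiv.Perm (Fin (m + l))} (h : SplitsAt μ m) :
    ∃ (α : Equiv.Perm (Fin m)) (β : Equiv.Perm (Fin l)), permSum α β = μ := by
  have hmaps : Set.MapsTo (finSumFinEquiv.symm.permCongr μ)
      (Set.range (Sum.inl : Fin m → Fin m ⊕ Fin l)) (Set.range Sum.inl) := by
    rintro _ ⟨i, rfl⟩
    have hi := h (Fin.castAdd l i) (by simp)
    refine ⟨⟨_, hi⟩, ?_⟩
    rw [Equiv.permCongr_apply, Equiv.eq_symm_apply]
    ext
    simp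
  obtain ⟨⟨α, β⟩, hαβ⟩ := Equiv.Perm.mem_sumCongrHom_range_of_perm_mapsTo_inl hmaps
  refine ⟨α, β, ?_⟩
  have hαβ' : Equiv.Perm.sumCongr α β = finSumFinEquiv.symm.permCongr μ := hαβ
  rw [permSum, hαβ']
  ext x
  simp [Equiv.permCongr_apply]

lemma permSum_injective {m l : ℕ} {α α' : Equiv.Perm (Fin m)} {β β' : Equiv.Perm (Fin l)}
    (h : permSum α β = permSum α' β') : α = α' ∧ β = β' := by
  constructor
  · ext i
    simpa [Fin.ext_iff] using congrArg (fun σ => σ (Fin.castAdd l i)) h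
  · ext i
    simpa [Fin.ext_iff] using congrArg (fun σ => σ (Fin.natAdd m i)) h

/-! ### Counting by the first block -/

lemma card_firstSplit (k : ℕ) {m l : ℕ} (hm : 1 ≤ m) :
    Nat.card {μ : Equiv.Perm (Fin (m + l)) // IsSorted k μ ∧ FirstSplit μ m} =
    Nat.card {α : Equiv.Perm (Fin m) // IsSorted k α ∧ eIndecomposable α} *
      Nat.card {β : Equiv.Perm (Fin l) // IsSorted k β} := by
  rw [← Nat.card_prod]
  symm
  refine Nat.card_congr (Equiv.ofBijective
    (fun x => ⟨permSum x.1.1 x.2.1, (isSorted_permSum _ _ k).2 ⟨x.1.2.1, x.2.2⟩,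
      (firstSplit_permSum hm _ _).2 x.1.2.2⟩) ⟨?_, ?_⟩)
  · rintro ⟨⟨α, _⟩, β, _⟩ ⟨⟨α', _⟩, β', _⟩ h
    obtain ⟨rfl, rfl⟩ := permSum_injective (congrArg Subtype.val h)
    rfl
  · rintro ⟨μ, hμ, hs⟩
    obtain ⟨α, β, rfl⟩ := exists_permSum hs.2.1
    have h := (isSorted_permSum α β k).1 hμ
    exact ⟨⟨⟨α, h.1, (firstSplit_permSum hm α β).1 hs⟩, β, h.2⟩, rfl⟩

/-- The length of the first indecomposable block of `μ`; for `n ≥ 1` the defining set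
contains `n`, and for `n = 0` the value is the irrelevant `1`. -/
noncomputable def firstBlock {n : ℕ} (μ : Equiv.Perm (Fin n)) : ℕ :=
  sInf {j | 1 ≤ j ∧ SplitsAt μ j}

lemma mem_splits {n : ℕ} (hn : 1 ≤ n) (μ : Equiv.Perm (Fin n)) :
    n ∈ {j | 1 ≤ j ∧ SplitsAt μ j} := ⟨hn, fun p _ => (μ p).isLt⟩

lemma firstSplit_firstBlock {n : ℕ} (hn : 1 ≤ n) (μ : Equiv.Perm (Fin n)) :
    FirstSplit μ (firstBlock μ) := by
  have h := Nat.sInf_mem ⟨n, mem_splits hn μ⟩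
  exact ⟨h.1, h.2, fun i hi hlt hs => Nat.notMem_of_lt_sInf hlt ⟨hi, hs⟩⟩

lemma firstBlock_le {n : ℕ} (hn : 1 ≤ n) (μ : Equiv.Perm (Fin n)) : firstBlock μ ≤ n :=
  Nat.sInf_le (mem_splits hn μ)

lemma firstBlock_eq_iff {n : ℕ} (hn : 1 ≤ n) (μ : Equiv.Perm (Fin n)) (j : ℕ) :
    firstBlock μ = j ↔ FirstSplit μ j := by
  constructor
  · rintro rfl
    exact firstSplit_firstBlock hn μ
  · intro h
    have h' := firstSplit_firstBlock hn μ
    rcases lt_trichotomy (firstBlock μ) j with hlt | heq | hgt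
    · exact (h.2.2 _ h'.1 hlt h'.2.1).elim
    · exact heq
    · exact (h'.2.2 _ h.1 hgt h.2.1).elim

open Classical in
lemma card_isSorted (k : ℕ) {n : ℕ} (hn : 1 ≤ n) :
    Nat.card {μ : Equiv.Perm (Fin n) // IsSorted k μ} =
    ∑ x ∈ Finset.HasAntidiagonal.antidiagonal n, (if x.1 = 0 then 0 else
      Nat.card {α : Equiv.Perm (Fin x.1) // IsSorted k α ∧ eIndecomposable α}) *
        Nat.card {β : Equiv.Perm (Fin x.2) // IsSorted k β} := by
  rw [Nat.card_eq_fintype_card, Fintype.card_subtype,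
    Finset.card_eq_sum_card_fiberwise (t := Finset.HasAntidiagonal.antidiagonal n)
      (f := fun μ => (firstBlock μ, n - firstBlock μ))]
  · refine Finset.sum_congr rfl fun x hx => ?_
    obtain ⟨j, l⟩ := x
    rw [Finset.HasAntidiagonal.mem_antidiagonal] at hx
    dsimp only at hx ⊢
    subst hx
    have hfil : Finset.filter (fun μ => (firstBlock μ, j + l - firstBlock μ) = (j, l))
        (Finset.univ.filter fun μ : Equiv.Perm (Fin (j + l)) => IsSorted k μ) =
        Finset.univ.filter fun μ => IsSorted k μ ∧ FirstSplit μ j := by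
      ext μ
      simp only [Finset.mem_filter, Finset.mem_univ, true_and, Prod.mk.injEq,
        ← firstBlock_eq_iff hn μ j]
      constructor
      · rintro ⟨h, h', -⟩
        exact ⟨h, h'⟩
      · rintro ⟨h, h'⟩
        exact ⟨h, h', by omega⟩
    rw [hfil, ← Fintype.card_subtype, ← Nat.card_eq_fintype_card]
    split_ifs with hj
    · subst hj
      rw [zero_mul, Nat.card_eq_zero]
      exact Or.inl ⟨fun μ => absurd μ.2.2.1 (by omega)⟩
    · exact card_firstSplit k (by omega)
  · intro μ _
    have := firstBlock_le hn μ
    simp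
    omega

/-- For `k ≥ 1`, with `a_n` the number of `k`-twist congruence classes of
`S_n` (and `a_0 = 1`) and `i_n` the number of classes whose weak-order minimum is
`E`-indecomposable, we have `(Σ aₙ tⁿ) · (1 - Σ_{n≥1} iₙ tⁿ) = 1` in `ℤ⟦t⟧`. -/
theorem generating_function_of_indecomposable_classes (k : ℕ) (hk : 1 ≤ k) :
    (PowerSeries.mk fun n => (Nat.card (Quot (twistCong k (n := n))) : ℤ)) *
      (1 - PowerSeries.mk fun n => if n = 0 then 0 else
        (Nat.card {μ : Equiv.Perm (Fin n) // isTwistClassMin k μ ∧ eIndecomposable μ} : ℤ))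
    = 1 := by
  simp only [card_classes, isTwistClassMin_iff]
  have key : (PowerSeries.mk fun n =>
      (Nat.card {μ : Equiv.Perm (Fin n) // IsSorted k μ} : ℤ)) =
      1 + (PowerSeries.mk fun n => if n = 0 then 0 else
        (Nat.card {μ : Equiv.Perm (Fin n) // IsSorted k μ ∧ eIndecomposable μ} : ℤ)) *
      PowerSeries.mk fun n => (Nat.card {μ : Equiv.Perm (Fin n) // IsSorted k μ} : ℤ) := by
    ext n
    rcases Nat.eq_zero_or_pos n with rfl | hn
    · have : Unique {μ : Equiv.Perm (Fin 0) // IsSorted k μ} :=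
        ⟨⟨1, fun _ ⟨p, _⟩ => p.elim0⟩, fun _ => Subtype.ext (Subsingleton.elim _ _)⟩
      simp
    · rw [map_add, PowerSeries.coeff_mul, PowerSeries.coeff_one, if_neg hn.ne', zero_add,
        PowerSeries.coeff_mk, card_isSorted k hn]
      push_cast
      simp only [PowerSeries.coeff_mk]
  linear_combination key
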